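/- Let L > 1 be an integer, let J be a finite-range step distribution invariant under lattice reflections and rotations containing the nearest-neighbour vectors, let γ ∈ (0,1/3), and let |s| be sufficiently small (depending only on J and γ). For every f ∈ C_c^∞(R^2) with ∫ f dx = 0, every admissible discretisation (f_ε) of f, and every sequence (ε_N) with ε_N → 0 and ε_N L^N → ∞: lim_{N→∞} lim_{m^2↓0} (f_{ε_N}, C̃^{Λ_N}(s,m^2) f_{ε_N}) = (v_J^2 + s)^{−1} · (f, (−Δ_{R^2})^{−1} f)_{R^2}. -/

import Mathlib

open Filter Real MeasureTheory

noncomputable section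

/-- The two-dimensional discrete torus of side length `n`. -/
abbrev Torus (n : ℕ) := ZMod n × ZMod n

/-- Canonical projection `ℤ² → Λ_n`. -/
def torusProj (n : ℕ) (x : ℤ × ℤ) : Torus n := ((x.1 : ZMod n), (x.2 : ZMod n))

/-- A finite-range step distribution: a finite subset of `ℤ²∖{0}` invariant under lattice
reflections and rotations and containing the nearest-neighbour vectors. -/
structure StepDist (J : Finset (ℤ × ℤ)) : Prop where
  not_zero : ((0 : ℤ), (0 : ℤ)) ∉ J
  nn₁ : ((1 : ℤ), (0 : ℤ)) ∈ J
  nn₂ : ((-1 : ℤ), (0 : ℤ)) ∈ J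
  nn₃ : ((0 : ℤ), (1 : ℤ)) ∈ J
  nn₄ : ((0 : ℤ), (-1 : ℤ)) ∈ J
  refl₁ : ∀ x ∈ J, ((-x.1, x.2) : ℤ × ℤ) ∈ J
  refl₂ : ∀ x ∈ J, ((x.1, -x.2) : ℤ × ℤ) ∈ J
  rot : ∀ x ∈ J, ((-x.2, x.1) : ℤ × ℤ) ∈ J

/-- The normalised range-`J` Laplacian on the torus `Λ_n`. -/
def laplacianJ (J : Finset (ℤ × ℤ)) (n : ℕ) (f : Torus n → ℝ) (x : Torus n) : ℝ :=
  (J.card : ℝ)⁻¹ * ∑ y ∈ J, (f (x + torusProj n y) - f x)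

/-- Configuration space of the Discrete Gaussian model: `2πℤ`-valued fields pinned at `0`. -/
def DGConfigs (n : ℕ) : Set (Torus n → ℝ) :=
  {σ | (∀ x, ∃ k : ℤ, σ x = 2 * Real.pi * k) ∧ σ 0 = 0}

/-- The energy `(1/(2β)) (σ, −Δ_J σ)`. -/
def dgEnergy (J : Finset (ℤ × ℤ)) (n : ℕ) (β : ℝ) (σ : Torus n → ℝ) : ℝ :=
  (1 / (2 * β)) * ∑' x : Torus n, σ x * -(laplacianJ J n σ x)

/-- Expectation of the Discrete Gaussian model on `Λ_n` at temperature `β`. -/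
def dgExpect (J : Finset (ℤ × ℤ)) (n : ℕ) (β : ℝ) (F : (Torus n → ℝ) → ℝ) : ℝ :=
  (∑' σ : DGConfigs n, Real.exp (-(dgEnergy J n β σ.1)) * F σ.1) /
    (∑' σ : DGConfigs n, Real.exp (-(dgEnergy J n β σ.1)))

/-- Pairing `(g, σ)` of a (finitely supported) `g : ℤ² → ℝ`, identified with a function on the
torus via the canonical projection, with a field `σ` on the torus. -/
def torusPairing (n : ℕ) (g : ℤ × ℤ → ℝ) (σ : Torus n → ℝ) : ℝ :=
  ∑' x : ℤ × ℤ, g x * σ (torusProj n x)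

/-- `v_J² = (2|J|)⁻¹ Σ_{x∈J} x₁²`. -/
def vJsq (J : Finset (ℤ × ℤ)) : ℝ :=
  (2 * (J.card : ℝ))⁻¹ * ∑ x ∈ J, ((x.1 : ℝ)) ^ 2

/-- Continuum Fourier transform `f̂(p) = ∫ f(x) e^{−i p·x} dx` on `ℝ²`. -/
def contFT (f : ℝ × ℝ → ℝ) (p : ℝ × ℝ) : ℂ :=
  ∫ x : ℝ × ℝ, (f x : ℂ) * Complex.exp (-Complex.I * ((p.1 * x.1 + p.2 * x.2 : ℝ) : ℂ))

/-- `(f, (−Δ_{ℝ²})⁻¹ f) = (2π)⁻² ∫ |p|⁻² |f̂(p)|² dp`. -/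
def gffPairing (f : ℝ × ℝ → ℝ) : ℝ :=
  ((2 * Real.pi) ^ 2)⁻¹ * ∫ p : ℝ × ℝ, Complex.normSq (contFT f p) / (p.1 ^ 2 + p.2 ^ 2)

/-- The four nearest-neighbour directions in `ℤ²`. -/
def dirsZ : Finset (ℤ × ℤ) := {((1 : ℤ), (0 : ℤ)), (-1, 0), (0, 1), (0, -1)}

/-- `(f_ε)` is an admissible discretisation of `f` with constant `C_f`. -/
structure IsAdmissible (f : ℝ × ℝ → ℝ) (fε : ℝ → (ℤ × ℤ) → ℝ) (Cf : ℝ) : Prop where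
  finite_supp : ∀ ε ∈ Set.Ioo (0 : ℝ) 1, (Function.support (fε ε)).Finite
  sum_zero : ∀ ε ∈ Set.Ioo (0 : ℝ) 1, ∑' x : ℤ × ℤ, fε ε x = 0
  grad0 : ∀ ε ∈ Set.Ioo (0 : ℝ) 1, ∀ x : ℤ × ℤ, |fε ε x| ≤ Cf * ε ^ 2
  grad1 : ∀ ε ∈ Set.Ioo (0 : ℝ) 1, ∀ x : ℤ × ℤ, ∀ μ ∈ dirsZ,
    |ε⁻¹ * (fε ε (x + μ) - fε ε x)| ≤ Cf * ε ^ 2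
  grad2 : ∀ ε ∈ Set.Ioo (0 : ℝ) 1, ∀ x : ℤ × ℤ, ∀ μ ∈ dirsZ, ∀ ν ∈ dirsZ,
    |ε⁻¹ ^ 2 * (fε ε (x + μ + ν) - fε ε (x + ν) - fε ε (x + μ) + fε ε x)| ≤ Cf * ε ^ 2
  supp : ∀ ε ∈ Set.Ioo (0 : ℝ) 1, ∀ x : ℤ × ℤ, fε ε x ≠ 0 →
    |(x.1 : ℝ)| ≤ Cf * ε⁻¹ ∧ |(x.2 : ℝ)| ≤ Cf * ε⁻¹
  approx : ∀ δ > (0 : ℝ), ∃ ε₀ > (0 : ℝ), ∀ ε ∈ Set.Ioo (0 : ℝ) 1, ε < ε₀ →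
    ∀ x : ℤ × ℤ, |ε⁻¹ ^ 2 * fε ε x - f (ε * x.1, ε * x.2)| ≤ δ

/-- The unnormalised nearest-neighbour Laplacian on the torus `Λ_n`. -/
def lapNN (n : ℕ) (f : Torus n → ℝ) (x : Torus n) : ℝ :=
  ∑ μ ∈ dirsZ, (f (x + torusProj n μ) - f x)

/-- Identification of a finitely supported `g : ℤ² → ℝ` with a function on the torus. -/
def toTorus (n : ℕ) (g : ℤ × ℤ → ℝ) (y : Torus n) : ℝ :=
  ∑' x : ℤ × ℤ, if torusProj n x = y then g x else 0

/-- `IsCtildeVal J n γ s m2 g val` says that `val = (g, C̃^{Λ_n}(s,m²) g)`, where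
`C̃(s,m²) = γ(1+sγΔ) + (1+sγΔ) C(s,m²) (1+sγΔ)`, `C(s,m²) = (C(m²)⁻¹ − sΔ)⁻¹` and
`C(m²) = (−Δ_J + m²)⁻¹ − γ·id`.  The operator inverses are encoded by their defining
equations: writing `h = (1+sγΔ)g`, `u = C(s,m²)h` and `w = h + sΔu`, the field `u` is
characterised by `(−Δ_J + m²)(u + γw) = w`, and then
`(g, C̃ g) = γ(g,h) + (g, (1+sγΔ)u)`. -/
def IsCtildeVal (J : Finset (ℤ × ℤ)) (n : ℕ) (γ s m2 : ℝ) (g : Torus n → ℝ) (val : ℝ) :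
    Prop :=
  ∃ u : Torus n → ℝ,
    (∀ x : Torus n,
      -(laplacianJ J n
          (fun y => u y + γ * (g y + s * γ * lapNN n g y + s * lapNN n u y)) x)
        + m2 * (u x + γ * (g x + s * γ * lapNN n g x + s * lapNN n u x))
        = g x + s * γ * lapNN n g x + s * lapNN n u x) ∧
    val = γ * (∑' x : Torus n, g x * (g x + s * γ * lapNN n g x))
        + ∑' x : Torus n, g x * (u x + s * γ * lapNN n u x)

/-!
All operators are translation invariant, so `C̃(s, m²)` is diagonal in Fourier space, with the
explicit symbol `(1 - sγλ) / ((λ_J + m²)(1 - sγλ) + sλ)`, where `λ` and `λ_J` are the symbols of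
`-Δ` and `-Δ_J`. For small `s` the denominator is bounded below by a multiple of `|θ|² + m²`; since
`f_ε` has mean zero, the mode `θ = 0` does not contribute and `m² ↓ 0` may be taken mode by mode.

At momentum `θ = εp` what remains is a Riemann sum of mesh `2π / (εn)` over `p`, for a torus of side
`n`. Vanishing mean gives `|f̂_ε(εp)| = O(|p|)` and one summation by parts gives `O(|p|⁻¹)`, so that
the summand `|f̂_ε(εp)|² · O(|p|⁻²)` is dominated by the integrable function `(1 + |p|²)⁻²`. It
converges pointwise because `f̂_ε(εp) → f̂(p)` and, by the symmetries of `J`, the symbol multiplied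
by `ε²` converges to `((v_J² + s)|p|²)⁻¹`.
-/

open scoped Topology

/-! ### Dominated convergence for Riemann sums over `δℤ²` -/

section RiemannSums

/-- The point `δk` of the rescaled lattice `δℤ² ⊂ ℝ²`. -/
def latticePoint (δ : ℝ) (k : ℤ × ℤ) : ℝ × ℝ := (δ * k.1, δ * k.2)

/-- The index `k` of the half-open square `δ(k + [0,1)²)` containing `x`. -/
def cellIndex (δ : ℝ) (x : ℝ × ℝ) : ℤ × ℤ := (⌊x.1 / δ⌋, ⌊x.2 / δ⌋)

lemma smul_latticePoint (c δ : ℝ) (k : ℤ × ℤ) :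
    c • latticePoint δ k = latticePoint (c * δ) k := by
  simp only [latticePoint, Prod.smul_mk, smul_eq_mul, mul_assoc]

lemma norm_latticePoint (δ : ℝ) (k : ℤ × ℤ) : ‖latticePoint δ k‖ = |δ| * ‖k‖ := by
  simp only [latticePoint, Prod.norm_def, norm_mul, Real.norm_eq_abs, Int.norm_eq_abs,
    mul_max_of_nonneg _ _ (abs_nonneg δ)]

lemma measurable_cellIndex (δ : ℝ) : Measurable (cellIndex δ) := by
  unfold cellIndex
  fun_prop

variable {δ : ℝ}

lemma floor_div_eq_iff (hδ : 0 < δ) {t : ℝ} {k : ℤ} :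
    ⌊t / δ⌋ = k ↔ t ∈ Set.Ico (k * δ) ((k + 1) * δ) := by
  rw [Int.floor_eq_iff, Set.mem_Ico, le_div_iff₀ hδ, div_lt_iff₀ hδ]

lemma norm_sub_latticePoint_cellIndex_le (hδ : 0 < δ) (x : ℝ × ℝ) :
    ‖x - latticePoint δ (cellIndex δ x)‖ ≤ δ := by
  have abs_sub_floor_le (t : ℝ) : |t - δ * ⌊t / δ⌋| ≤ δ := by
    obtain ⟨h₁, h₂⟩ := (floor_div_eq_iff hδ (t := t)).1 rfl
    rw [abs_le]
    constructor <;> linarith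
  exact norm_prod_le_iff.2 ⟨abs_sub_floor_le x.1, abs_sub_floor_le x.2⟩

lemma preimage_cellIndex_singleton (hδ : 0 < δ) (k : ℤ × ℤ) :
    cellIndex δ ⁻¹' {k} =
      Set.Ico (k.1 * δ) ((k.1 + 1) * δ) ×ˢ Set.Ico (k.2 * δ) ((k.2 + 1) * δ) := by
  ext x
  rw [Set.mem_preimage, Set.mem_singleton_iff, Prod.ext_iff, Set.mem_prod,
    ← floor_div_eq_iff hδ, ← floor_div_eq_iff hδ, cellIndex]

lemma map_cellIndex_volume_singleton (hδ : 0 < δ) (k : ℤ × ℤ) :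
    volume.map (cellIndex δ) {k} = ENNReal.ofReal (δ ^ 2) := by
  rw [Measure.map_apply (measurable_cellIndex δ) (measurableSet_singleton k),
    preimage_cellIndex_singleton hδ, Measure.volume_eq_prod, Measure.prod_prod,
    Real.volume_Ico, Real.volume_Ico, ← ENNReal.ofReal_mul (by linarith)]
  congr 1
  ring

lemma integral_comp_cellIndex {E : Type*} [NormedAddCommGroup E] [NormedSpace ℝ E]
    [CompleteSpace E] (hδ : 0 < δ) {F : ℤ × ℤ → E} (hF : (Function.support F).Finite) :
    ∫ x, F (cellIndex δ x) = δ ^ 2 • ∑' k, F k := by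
  have eq_zero_of_notMem : ∀ k ∉ hF.toFinset, F k = 0 := fun k hk => by simpa using hk
  have integrableOn : IntegrableOn F hF.toFinset (volume.map (cellIndex δ)) := by
    rw [← Set.biUnion_of_singleton (hF.toFinset : Set (ℤ × ℤ)),
      integrableOn_finite_biUnion hF.toFinset.finite_toSet]
    intro k _
    refine integrableOn_singleton (hx := ?_)
    rw [map_cellIndex_volume_singleton hδ k]
    exact ENNReal.ofReal_lt_top
  rw [← integral_map (measurable_cellIndex δ).aemeasurable
      StronglyMeasurable.of_discrete.aestronglyMeasurable,
    ← setIntegral_eq_integral_of_forall_compl_eq_zero (s := hF.toFinset)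
      (by simp),
    setIntegral_finset _ integrableOn, tsum_eq_sum eq_zero_of_notMem, Finset.smul_sum]
  refine Finset.sum_congr rfl fun k _ => ?_
  rw [measureReal_def, map_cellIndex_volume_singleton hδ, ENNReal.toReal_ofReal (sq_nonneg δ)]

variable {ι : Type*} {l : Filter ι}

lemma tendsto_latticePoint_cellIndex {δ : ι → ℝ} (hδ : ∀ i, 0 < δ i)
    (hδ0 : Tendsto δ l (𝓝 0)) (x : ℝ × ℝ) :
    Tendsto (fun i => latticePoint (δ i) (cellIndex (δ i) x)) l (𝓝 x) := by
  rw [tendsto_iff_norm_sub_tendsto_zero]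
  refine squeeze_zero (fun _ => norm_nonneg _) (fun i => ?_) hδ0
  rw [norm_sub_rev]
  exact norm_sub_latticePoint_cellIndex_le (hδ i) x

/-- The integrable envelope `(1 + |x|²)⁻²` (sup norm) dominating all Riemann sums on `ℝ²`. -/
def decayEnvelope (x : ℝ × ℝ) : ℝ := ((1 + ‖x‖ ^ 2) ^ 2)⁻¹

lemma decayEnvelope_pos (x : ℝ × ℝ) : 0 < decayEnvelope x := by
  unfold decayEnvelope
  positivity

lemma integrable_decayEnvelope : Integrable decayEnvelope := by
  have dim_lt : (Module.finrank ℝ (ℝ × ℝ) : ℝ) < 4 := by norm_num [Module.finrank_prod]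
  refine (integrable_rpow_neg_one_add_norm_sq dim_lt).congr (Eventually.of_forall fun x => ?_)
  have : (-4 / 2 : ℝ) = -(2 : ℕ) := by norm_num
  simp only [decayEnvelope, this]
  rw [Real.rpow_neg (by positivity), Real.rpow_natCast]

lemma decayEnvelope_le_of_norm_sub_le_one {x y : ℝ × ℝ} (hxy : ‖x - y‖ ≤ 1) :
    decayEnvelope y ≤ 9 * decayEnvelope x := by
  have norm_le : ‖x‖ ≤ ‖y‖ + 1 := by linarith [norm_sub_norm_le x y]
  have one_add_sq_le : 1 + ‖x‖ ^ 2 ≤ 3 * (1 + ‖y‖ ^ 2) := by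
    nlinarith [norm_nonneg x, sq_nonneg (‖y‖ - 1 / 2), sq_nonneg (‖y‖ - 1)]
  rw [decayEnvelope, decayEnvelope, ← div_eq_mul_inv, inv_eq_one_div,
    div_le_div_iff₀ (by positivity) (by positivity), one_mul]
  calc (1 + ‖x‖ ^ 2) ^ 2 ≤ (3 * (1 + ‖y‖ ^ 2)) ^ 2 := by gcongr
    _ = 9 * (1 + ‖y‖ ^ 2) ^ 2 := by ring

theorem tendsto_sq_smul_tsum_integral [l.IsCountablyGenerated] {E : Type*} [NormedAddCommGroup E]
    [NormedSpace ℝ E] [CompleteSpace E] {δ : ι → ℝ} (hδ : ∀ i, 0 < δ i) (hδ0 : Tendsto δ l (𝓝 0))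
    {F : ι → ℤ × ℤ → E} (hF : ∀ i, (Function.support (F i)).Finite)
    {C : ℝ} (hbound : ∀ i k, ‖F i k‖ ≤ C * decayEnvelope (latticePoint (δ i) k))
    {g : ℝ × ℝ → E}
    (hlim : ∀ᵐ x, ∀ k : ι → ℤ × ℤ, Tendsto (fun i => latticePoint (δ i) (k i)) l (𝓝 x) →
      Tendsto (fun i => F i (k i)) l (𝓝 (g x))) :
    Tendsto (fun i => δ i ^ 2 • ∑' k, F i k) l (𝓝 (∫ x, g x)) := by
  simp_rw [← integral_comp_cellIndex (hδ _) (hF _)]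
  refine tendsto_integral_filter_of_dominated_convergence (fun x => |C| * (9 * decayEnvelope x))
    (Eventually.of_forall fun i => ?_) ?_ ((integrable_decayEnvelope.const_mul 9).const_mul |C|) ?_
  · exact (StronglyMeasurable.of_discrete.comp_measurable
      (measurable_cellIndex _)).aestronglyMeasurable
  · filter_upwards [hδ0.eventually (gt_mem_nhds one_pos)] with i hi
    refine Eventually.of_forall fun x => ?_
    have norm_sub_le : ‖x - latticePoint (δ i) (cellIndex (δ i) x)‖ ≤ 1 :=
      (norm_sub_latticePoint_cellIndex_le (hδ i) x).trans hi.le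
    have envelope_nonneg := (decayEnvelope_pos (latticePoint (δ i) (cellIndex (δ i) x))).le
    calc ‖F i (cellIndex (δ i) x)‖
        ≤ C * decayEnvelope (latticePoint (δ i) (cellIndex (δ i) x)) := hbound i _
      _ ≤ |C| * (9 * decayEnvelope x) := by
        gcongr
        · exact le_abs_self C
        · exact decayEnvelope_le_of_norm_sub_le_one norm_sub_le
  · filter_upwards [hlim] with x hx
    exact hx _ (tendsto_latticePoint_cellIndex hδ hδ0 x)

end RiemannSums

/-! ### Fourier analysis on the torus -/

/-- The character `x ↦ e^{iθ·x}` of `ℤ²`. -/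
def latticeChar (θ : ℝ × ℝ) : AddChar (ℤ × ℤ) ℂ where
  toFun x := Complex.exp (Complex.I * (θ.1 * x.1 + θ.2 * x.2 : ℝ))
  map_zero_eq_one' := by simp
  map_add_eq_mul' x y := by
    rw [← Complex.exp_add]
    push_cast [Prod.fst_add, Prod.snd_add]
    ring_nf

/-- The eigenvalue at momentum `θ` of minus the unnormalised range-`S` Laplacian on `ℤ²`. -/
def stepSymbol (S : Finset (ℤ × ℤ)) (θ : ℝ × ℝ) : ℝ :=
  ∑ y ∈ S, (1 - cos (θ.1 * y.1 + θ.2 * y.2))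

/-- The eigenvalue at momentum `θ` of `-Δ_J`. -/
def laplacianSymbol (J : Finset (ℤ × ℤ)) (θ : ℝ × ℝ) : ℝ := (J.card : ℝ)⁻¹ * stepSymbol J θ

lemma latticeChar_apply (θ : ℝ × ℝ) (x : ℤ × ℤ) :
    latticeChar θ x = Complex.exp (Complex.I * (θ.1 * x.1 + θ.2 * x.2 : ℝ)) := rfl

lemma latticeChar_add_latticeChar_neg (θ : ℝ × ℝ) (y : ℤ × ℤ) :
    latticeChar θ y + latticeChar θ (-y) = 2 * cos (θ.1 * y.1 + θ.2 * y.2) := by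
  rw [Complex.ofReal_cos, Complex.two_cos, latticeChar_apply, latticeChar_apply]
  push_cast [Prod.fst_neg, Prod.snd_neg]
  ring_nf

lemma sum_latticeChar_sub_one {S : Finset (ℤ × ℤ)} (hS : ∀ y ∈ S, -y ∈ S) (θ : ℝ × ℝ) :
    ∑ y ∈ S, (latticeChar θ y - 1) = -stepSymbol S θ := by
  have sum_neg : ∑ y ∈ S, (latticeChar θ (-y) - 1) = ∑ y ∈ S, (latticeChar θ y - 1) :=
    Finset.sum_nbij' (- ·) (- ·) hS hS (by simp) (by simp) (by simp)
  refine mul_left_cancel₀ (two_ne_zero (α := ℂ)) ?_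
  calc 2 * ∑ y ∈ S, (latticeChar θ y - 1)
      = ∑ y ∈ S, (latticeChar θ y + latticeChar θ (-y) - 2) := by
        rw [two_mul, ← congrArg (_ + ·) sum_neg, ← Finset.sum_add_distrib]
        exact Finset.sum_congr rfl fun y _ => by ring
    _ = 2 * -stepSymbol S θ := by
        simp_rw [latticeChar_add_latticeChar_neg, stepSymbol, Complex.ofReal_sum,
          ← Finset.sum_neg_distrib, Finset.mul_sum]
        exact Finset.sum_congr rfl fun y _ => by push_cast; ring

lemma neg_mem_dirsZ : ∀ y ∈ dirsZ, -y ∈ dirsZ := by decide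

lemma StepDist.neg_mem {J : Finset (ℤ × ℤ)} (hJ : StepDist J) : ∀ y ∈ J, -y ∈ J :=
  fun _ hy => hJ.refl₂ _ (hJ.refl₁ _ hy)

section TorusFourier

variable (n : ℕ)

/-- The representative of `k` closest to the origin. -/
def torusLift (k : Torus n) : ℤ × ℤ := (k.1.valMinAbs, k.2.valMinAbs)

/-- The momentum `2πk/n ∈ (-π, π]²` of the Fourier mode `k` of the torus. -/
def torusFreq (k : Torus n) : ℝ × ℝ := latticePoint (2 * π / n) (torusLift n k)

lemma torusProj_torusLift (k : Torus n) : torusProj n (torusLift n k) = k := by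
  simp [torusProj, torusLift]

variable [NeZero n]

/-- The character `x ↦ e^{2πi k·x/n}` of the torus. -/
def torusChar (k : Torus n) : AddChar (Torus n) ℂ :=
  ZMod.stdAddChar.compAddMonoidHom
    ((AddMonoidHom.mulLeft k.1).coprod (AddMonoidHom.mulLeft k.2))

/-- The discrete Fourier transform `ĝ(k) = ∑ₓ g(x) e^{-2πi k·x/n}` of real functions on the torus,
normalised as a plain sum. -/
def torusDFT : (Torus n → ℝ) →ₗ[ℝ] Torus n → ℂ where
  toFun g k := ∑ x, g x * torusChar n k (-x)
  map_add' g h := by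
    ext k
    simp [add_mul, Finset.sum_add_distrib]
  map_smul' c g := by
    ext k
    simp [Finset.mul_sum, mul_assoc]

variable {n}

lemma torusChar_apply (k x : Torus n) :
    torusChar n k x = ZMod.stdAddChar (k.1 * x.1 + k.2 * x.2) := rfl

lemma torusDFT_apply (g : Torus n → ℝ) (k : Torus n) :
    torusDFT n g k = ∑ x, g x * torusChar n k (-x) := rfl

lemma torusChar_torusProj (k : Torus n) (x : ℤ × ℤ) :
    torusChar n k (torusProj n x) = latticeChar (torusFreq n k) x := by
  have pairing_eq : k.1 * (torusProj n x).1 + k.2 * (torusProj n x).2 =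
      ((torusLift n k).1 * x.1 + (torusLift n k).2 * x.2 : ℤ) := by
    simp [torusProj, torusLift]
  rw [torusChar_apply, pairing_eq, ZMod.stdAddChar_coe, latticeChar_apply, torusFreq,
    latticePoint]
  congr 1
  push_cast
  field_simp

lemma sum_torusChar (x : Torus n) :
    ∑ k, torusChar n k x = if x = 0 then (n : ℂ) ^ 2 else 0 := by
  simp_rw [torusChar_apply, AddChar.map_add_eq_mul, Fintype.sum_prod_type, ← Finset.mul_sum,
    ← Finset.sum_mul, AddChar.sum_mulShift _ (ZMod.isPrimitive_stdAddChar n), ZMod.card]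
  by_cases h₁ : x.1 = 0 <;> by_cases h₂ : x.2 = 0 <;> simp [Prod.ext_iff, h₁, h₂, sq]

lemma sum_conj_torusDFT_mul_torusDFT (g v : Torus n → ℝ) :
    ∑ k, (starRingEnd ℂ) (torusDFT n g k) * torusDFT n v k = (n : ℂ) ^ 2 * ∑ x, g x * v x := by
  have conj_mul (x y k : Torus n) :
      (starRingEnd ℂ) (g x * torusChar n k (-x)) * (v y * torusChar n k (-y)) =
        g x * v y * torusChar n k (x - y) := by
    rw [sub_eq_add_neg, AddChar.map_add_eq_mul, map_mul, ← AddChar.map_neg_eq_conj, neg_neg,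
      Complex.conj_ofReal]
    ring
  have sum_modes (x y : Torus n) : ∑ k, (g x * v y * torusChar n k (x - y) : ℂ) =
      if x = y then (n : ℂ) ^ 2 * (g x * v x) else 0 := by
    rw [← Finset.mul_sum, sum_torusChar]
    simp only [sub_eq_zero]
    split_ifs with h
    · rw [h, mul_comm]
    · exact mul_zero _
  simp_rw [torusDFT_apply, map_sum, Finset.sum_mul_sum, conj_mul]
  rw [Finset.sum_comm, Complex.ofReal_sum, Finset.mul_sum]
  refine Finset.sum_congr rfl fun x _ => ?_
  rw [Finset.sum_comm]
  simp [sum_modes]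

lemma torusDFT_translate (g : Torus n → ℝ) (y k : Torus n) :
    torusDFT n (fun x => g (x + y)) k = torusChar n k y * torusDFT n g k := by
  rw [torusDFT_apply, torusDFT_apply, Finset.mul_sum,
    ← Equiv.sum_comp (Equiv.addRight y) fun x => torusChar n k y * (g x * torusChar n k (-x))]
  refine Finset.sum_congr rfl fun x _ => ?_
  have : torusChar n k (-x) = torusChar n k y * torusChar n k (-(x + y)) := by
    rw [← AddChar.map_add_eq_mul]
    congr 1
    abel
  rw [Equiv.coe_addRight, this]
  ring

lemma torusDFT_sum_translate_sub {S : Finset (ℤ × ℤ)} (hS : ∀ y ∈ S, -y ∈ S) (g : Torus n → ℝ)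
    (k : Torus n) :
    torusDFT n (fun x => ∑ y ∈ S, (g (x + torusProj n y) - g x)) k =
      -stepSymbol S (torusFreq n k) * torusDFT n g k := by
  have eq_sum : (fun x => ∑ y ∈ S, (g (x + torusProj n y) - g x)) =
      ∑ y ∈ S, ((fun x => g (x + torusProj n y)) - g) := by
    ext x
    simp
  rw [eq_sum, map_sum, Finset.sum_apply, ← sum_latticeChar_sub_one hS, Finset.sum_mul]
  refine Finset.sum_congr rfl fun y _ => ?_
  rw [map_sub, Pi.sub_apply, torusDFT_translate, torusChar_torusProj, sub_one_mul]

lemma torusDFT_lapNN (g : Torus n → ℝ) (k : Torus n) :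
    torusDFT n (lapNN n g) k = -stepSymbol dirsZ (torusFreq n k) * torusDFT n g k :=
  torusDFT_sum_translate_sub neg_mem_dirsZ g k

lemma torusDFT_laplacianJ {J : Finset (ℤ × ℤ)} (hJ : StepDist J) (g : Torus n → ℝ)
    (k : Torus n) :
    torusDFT n (laplacianJ J n g) k = -laplacianSymbol J (torusFreq n k) * torusDFT n g k := by
  have eq_smul : laplacianJ J n g =
      (J.card : ℝ)⁻¹ • fun x => ∑ y ∈ J, (g (x + torusProj n y) - g x) := rfl
  rw [eq_smul, map_smul, Pi.smul_apply, torusDFT_sum_translate_sub hJ.neg_mem, laplacianSymbol,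
    Complex.real_smul]
  push_cast
  ring

end TorusFourier

/-! ### The quadratic form in Fourier space -/

/-- The denominator of the symbol of `C̃(s, m²)` after clearing the inner inverse. -/
def ctildeDenom (J : Finset (ℤ × ℤ)) (γ s m2 : ℝ) (θ : ℝ × ℝ) : ℝ :=
  (laplacianSymbol J θ + m2) * (1 - s * γ * stepSymbol dirsZ θ) + s * stepSymbol dirsZ θ

/-- The eigenvalue of `C̃(s, m²)` at momentum `θ`. The two contributions of `γ` in its definition
combine with the inner inverse to a single quotient. -/
def ctildeSymbol (J : Finset (ℤ × ℤ)) (γ s m2 : ℝ) (θ : ℝ × ℝ) : ℝ :=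
  (1 - s * γ * stepSymbol dirsZ θ) / ctildeDenom J γ s m2 θ

section QuadraticForm

variable {n : ℕ} [NeZero n] {J : Finset (ℤ × ℤ)} {γ s m2 : ℝ} {g u : Torus n → ℝ}

lemma torusDFT_add_mul_lapNN (c : ℝ) (g : Torus n → ℝ) (k : Torus n) :
    torusDFT n (fun x => g x + c * lapNN n g x) k =
      (1 - c * stepSymbol dirsZ (torusFreq n k)) * torusDFT n g k := by
  have eq_add_smul : (fun x => g x + c * lapNN n g x) = g + c • lapNN n g := rfl
  rw [eq_add_smul, map_add, map_smul, Pi.add_apply, Pi.smul_apply, torusDFT_lapNN,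
    Complex.real_smul]
  ring

lemma ctilde_mode_equation (hJ : StepDist J)
    (hu : ∀ x, -(laplacianJ J n
          (fun y => u y + γ * (g y + s * γ * lapNN n g y + s * lapNN n u y)) x)
        + m2 * (u x + γ * (g x + s * γ * lapNN n g x + s * lapNN n u x))
        = g x + s * γ * lapNN n g x + s * lapNN n u x) (k : Torus n) :
    ctildeDenom J γ s m2 (torusFreq n k) *
        ((1 - s * γ * stepSymbol dirsZ (torusFreq n k)) *
          (γ * torusDFT n g k + torusDFT n u k)) =
      (1 - s * γ * stepSymbol dirsZ (torusFreq n k)) * torusDFT n g k := by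
  set w : Torus n → ℝ := (fun x => g x + s * γ * lapNN n g x) + s • lapNN n u with hw
  have field_eq : -laplacianJ J n (u + γ • w) + m2 • (u + γ • w) = w := funext hu
  have dft_w : torusDFT n w k =
      (1 - s * γ * stepSymbol dirsZ (torusFreq n k)) * torusDFT n g k -
        s * stepSymbol dirsZ (torusFreq n k) * torusDFT n u k := by
    rw [hw, map_add, map_smul, Pi.add_apply, Pi.smul_apply, torusDFT_add_mul_lapNN,
      torusDFT_lapNN, Complex.real_smul]
    push_cast
    ring
  have dft_field_eq : (laplacianSymbol J (torusFreq n k) + m2) *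
      (torusDFT n u k + γ * torusDFT n w k) = torusDFT n w k := by
    conv_rhs => rw [← field_eq]
    simp only [map_add, map_neg, map_smul, Pi.add_apply, Pi.neg_apply, Pi.smul_apply,
      torusDFT_laplacianJ hJ, Complex.real_smul]
    ring
  rw [dft_w] at dft_field_eq
  rw [ctildeDenom]
  push_cast
  linear_combination (1 - s * γ * stepSymbol dirsZ (torusFreq n k) : ℂ) * dft_field_eq

theorem IsCtildeVal.eq_sum_ctildeSymbol {val : ℝ} (h : IsCtildeVal J n γ s m2 g val)
    (hJ : StepDist J) (hD : ∀ k : Torus n, ctildeDenom J γ s m2 (torusFreq n k) ≠ 0) :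
    val = ((n : ℝ) ^ 2)⁻¹ *
      ∑ k, Complex.normSq (torusDFT n g k) * ctildeSymbol J γ s m2 (torusFreq n k) := by
  obtain ⟨u, hu, hval⟩ := h
  have mode_value (k : Torus n) : (starRingEnd ℂ) (torusDFT n g k) *
      (γ * torusDFT n (fun x => g x + s * γ * lapNN n g x) k +
        torusDFT n (fun x => u x + s * γ * lapNN n u x) k) =
      (Complex.normSq (torusDFT n g k) * ctildeSymbol J γ s m2 (torusFreq n k) : ℝ) := by
    have denom_ne_zero : (ctildeDenom J γ s m2 (torusFreq n k) : ℂ) ≠ 0 := mod_cast hD k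
    rw [torusDFT_add_mul_lapNN, torusDFT_add_mul_lapNN, ctildeSymbol]
    push_cast
    rw [Complex.normSq_eq_conj_mul_self, mul_assoc ((starRingEnd ℂ) _), ← mul_div_assoc]
    congr 1
    rw [eq_div_iff denom_ne_zero]
    linear_combination ctilde_mode_equation hJ hu k
  have sum_eq : (n : ℝ) ^ 2 * val =
      ∑ k, Complex.normSq (torusDFT n g k) * ctildeSymbol J γ s m2 (torusFreq n k) := by
    rw [← Complex.ofReal_inj, Complex.ofReal_sum]
    simp_rw [← mode_value, mul_add, mul_left_comm _ (γ : ℂ)]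
    rw [Finset.sum_add_distrib, ← Finset.mul_sum, sum_conj_torusDFT_mul_torusDFT,
      sum_conj_torusDFT_mul_torusDFT, hval, tsum_fintype, tsum_fintype]
    push_cast
    ring
  rw [← sum_eq, inv_mul_cancel_left₀ (pow_ne_zero 2 (NeZero.ne (n : ℝ)))]

end QuadraticForm

/-! ### Bounds and small-momentum asymptotics of the symbols -/

/-- The smallness of the coupling `s` under which `C̃(s, m²)` is controlled by the free resolvent:
`sΔ` is a small perturbation of `Δ_J`, and `sγΔ` a small perturbation of the identity. -/
structure SmallCoupling (J : Finset (ℤ × ℤ)) (γ s : ℝ) : Prop where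
  abs_s_le : |s| ≤ (4 * (J.card : ℝ))⁻¹
  abs_s_mul_γ_le : |s * γ| ≤ 1 / 16

section SymbolBounds

variable {J : Finset (ℤ × ℤ)} {γ s m2 : ℝ} {θ : ℝ × ℝ}

lemma stepSymbol_dirsZ (θ : ℝ × ℝ) : stepSymbol dirsZ θ = 4 - 2 * cos θ.1 - 2 * cos θ.2 := by
  rw [stepSymbol, dirsZ, Finset.sum_insert (by decide), Finset.sum_insert (by decide),
    Finset.sum_insert (by decide), Finset.sum_singleton]
  simp only [Int.cast_one, mul_one, Int.cast_zero, mul_zero, add_zero, Int.cast_neg,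
    mul_neg, cos_neg, zero_add]
  ring

lemma stepSymbol_dirsZ_mem_Icc (θ : ℝ × ℝ) : stepSymbol dirsZ θ ∈ Set.Icc 0 8 := by
  rw [stepSymbol_dirsZ]
  constructor <;> linarith [neg_one_le_cos θ.1, neg_one_le_cos θ.2, cos_le_one θ.1, cos_le_one θ.2]

lemma norm_sq_le_stepSymbol_dirsZ (hθ : ‖θ‖ ≤ π) :
    4 / π ^ 2 * ‖θ‖ ^ 2 ≤ stepSymbol dirsZ θ := by
  obtain ⟨h₁, h₂⟩ := norm_prod_le_iff.1 hθ
  have norm_sq_le : ‖θ‖ ^ 2 ≤ θ.1 ^ 2 + θ.2 ^ 2 := by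
    rw [Prod.norm_def]
    rcases max_choice ‖θ.1‖ ‖θ.2‖ with h | h <;> rw [h, norm_eq_abs, sq_abs] <;> nlinarith
  calc 4 / π ^ 2 * ‖θ‖ ^ 2 ≤ 4 / π ^ 2 * (θ.1 ^ 2 + θ.2 ^ 2) := by gcongr
    _ = 2 * (2 / π ^ 2 * θ.1 ^ 2) + 2 * (2 / π ^ 2 * θ.2 ^ 2) := by ring
    _ ≤ stepSymbol dirsZ θ := by
      rw [stepSymbol_dirsZ]
      linarith [cos_le_one_sub_mul_cos_sq h₁, cos_le_one_sub_mul_cos_sq h₂]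

lemma StepDist.dirsZ_subset (hJ : StepDist J) : dirsZ ⊆ J := by
  simp [dirsZ, Finset.insert_subset_iff, hJ.nn₁, hJ.nn₂, hJ.nn₃, hJ.nn₄]

lemma StepDist.card_pos (hJ : StepDist J) : (0 : ℝ) < J.card :=
  mod_cast Finset.card_pos.2 ⟨_, hJ.nn₁⟩

lemma StepDist.stepSymbol_dirsZ_le_laplacianSymbol (hJ : StepDist J) (θ : ℝ × ℝ) :
    (J.card : ℝ)⁻¹ * stepSymbol dirsZ θ ≤ laplacianSymbol J θ := by
  unfold laplacianSymbol
  gcongr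
  exact Finset.sum_le_sum_of_subset_of_nonneg hJ.dirsZ_subset fun y _ _ =>
    sub_nonneg.2 (cos_le_one _)

lemma SmallCoupling.of_abs_le (hJ : StepDist J) (hs : |s| ≤ (16 * (J.card + |γ|))⁻¹) :
    SmallCoupling J γ s where
  abs_s_le := by
    have := hJ.card_pos
    exact hs.trans (inv_anti₀ (by positivity) (by linarith [abs_nonneg γ]))
  abs_s_mul_γ_le := by
    have := hJ.card_pos
    calc |s * γ| = |s| * |γ| := abs_mul s γ
      _ ≤ (16 * (J.card + |γ|))⁻¹ * (J.card + |γ|) := by gcongr; linarith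
      _ = 1 / 16 := by field_simp

namespace SmallCoupling

lemma abs_mul_stepSymbol_le (hs : SmallCoupling J γ s) (θ : ℝ × ℝ) :
    |s * γ * stepSymbol dirsZ θ| ≤ 1 / 2 := by
  obtain ⟨h₀, h₈⟩ := stepSymbol_dirsZ_mem_Icc θ
  rw [abs_mul, abs_of_nonneg h₀]
  calc |s * γ| * stepSymbol dirsZ θ ≤ 1 / 16 * 8 := by
        gcongr
        exact hs.abs_s_mul_γ_le
    _ = 1 / 2 := by norm_num

lemma le_ctildeDenom (hs : SmallCoupling J γ s) (hJ : StepDist J) (hm : 0 ≤ m2) (hθ : ‖θ‖ ≤ π) :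
    ‖θ‖ ^ 2 / (π ^ 2 * J.card) + m2 / 2 ≤ ctildeDenom J γ s m2 θ := by
  set c := (J.card : ℝ)⁻¹ with hc
  set lam := stepSymbol dirsZ θ with hlam
  have c_nonneg : 0 ≤ c := by positivity
  have lam_nonneg : 0 ≤ lam := (stepSymbol_dirsZ_mem_Icc θ).1
  have symbol_ge : c * lam ≤ laplacianSymbol J θ := hJ.stepSymbol_dirsZ_le_laplacianSymbol θ
  have symbol_nonneg : 0 ≤ laplacianSymbol J θ := (mul_nonneg c_nonneg lam_nonneg).trans symbol_ge
  have numer_ge : 1 / 2 ≤ 1 - s * γ * lam := by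
    linarith [(abs_le.1 (hs.abs_mul_stepSymbol_le θ)).2]
  have s_ge : -(c / 4) ≤ s := by
    have := (abs_le.1 hs.abs_s_le).1
    rw [mul_inv, ← hc] at this
    linarith
  calc ‖θ‖ ^ 2 / (π ^ 2 * J.card) + m2 / 2 = c / 4 * (4 / π ^ 2 * ‖θ‖ ^ 2) + m2 / 2 := by
        rw [hc]
        ring
    _ ≤ c / 4 * lam + m2 / 2 := by
        gcongr
        exact norm_sq_le_stepSymbol_dirsZ hθ
    _ ≤ (laplacianSymbol J θ + m2) * (1 / 2) + -(c / 4) * lam := by linarith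
    _ ≤ ctildeDenom J γ s m2 θ := by
        unfold ctildeDenom
        gcongr

lemma norm_sq_mul_abs_ctildeSymbol_le (hs : SmallCoupling J γ s) (hJ : StepDist J)
    (hθ : ‖θ‖ ≤ π) : ‖θ‖ ^ 2 * |ctildeSymbol J γ s 0 θ| ≤ 2 * π ^ 2 * J.card := by
  have card_pos := hJ.card_pos
  have denom_ge : ‖θ‖ ^ 2 / (π ^ 2 * J.card) ≤ ctildeDenom J γ s 0 θ := by
    simpa using hs.le_ctildeDenom hJ le_rfl hθ
  have denom_nonneg : 0 ≤ ctildeDenom J γ s 0 θ := le_trans (by positivity) denom_ge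
  have numer_le : |1 - s * γ * stepSymbol dirsZ θ| ≤ 2 := by
    have := abs_le.1 (hs.abs_mul_stepSymbol_le θ)
    rw [abs_le]
    constructor <;> linarith
  rw [ctildeSymbol, abs_div, abs_of_nonneg denom_nonneg, mul_div_assoc']
  refine div_le_of_le_mul₀ denom_nonneg (by positivity) ?_
  calc ‖θ‖ ^ 2 * |1 - s * γ * stepSymbol dirsZ θ| ≤ ‖θ‖ ^ 2 * 2 := by gcongr
    _ = 2 * π ^ 2 * J.card * (‖θ‖ ^ 2 / (π ^ 2 * J.card)) := by field_simp
    _ ≤ 2 * π ^ 2 * J.card * ctildeDenom J γ s 0 θ := by gcongr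

end SmallCoupling

lemma StepDist.sum_sq_pairing (hJ : StepDist J) (q : ℝ × ℝ) :
    ∑ y ∈ J, (q.1 * y.1 + q.2 * y.2) ^ 2 / 2 = J.card * (vJsq J * (q.1 ^ 2 + q.2 ^ 2)) := by
  have cross_eq_zero : ∑ y ∈ J, (y.1 * y.2 : ℝ) = 0 := by
    have : ∑ y ∈ J, (y.1 * y.2 : ℝ) = ∑ y ∈ J, -(y.1 * y.2 : ℝ) :=
      Finset.sum_nbij' (fun y => (-y.1, y.2)) (fun y => (-y.1, y.2)) hJ.refl₁ hJ.refl₁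
        (by simp) (by simp) (by simp)
    rw [Finset.sum_neg_distrib] at this
    linarith
  have sum_snd_sq : ∑ y ∈ J, (y.2 : ℝ) ^ 2 = ∑ y ∈ J, (y.1 : ℝ) ^ 2 :=
    Finset.sum_nbij' (fun y => (-y.2, y.1)) (fun y => (y.2, -y.1)) hJ.rot
      (fun y hy => by simpa using hJ.neg_mem _ (hJ.rot _ hy)) (by simp) (by simp) (by simp)
  have expand (y : ℤ × ℤ) : (q.1 * y.1 + q.2 * y.2) ^ 2 / 2 =
      q.1 ^ 2 / 2 * (y.1 : ℝ) ^ 2 + q.2 ^ 2 / 2 * (y.2 : ℝ) ^ 2 + q.1 * q.2 * (y.1 * y.2) := by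
    ring
  have card_pos := hJ.card_pos
  simp_rw [expand, Finset.sum_add_distrib, ← Finset.mul_sum, cross_eq_zero, sum_snd_sq, vJsq]
  field_simp
  ring

lemma sum_sq_pairing_dirsZ (q : ℝ × ℝ) :
    ∑ y ∈ dirsZ, (q.1 * y.1 + q.2 * y.2) ^ 2 / 2 = q.1 ^ 2 + q.2 ^ 2 := by
  rw [dirsZ, Finset.sum_insert (by decide), Finset.sum_insert (by decide),
    Finset.sum_insert (by decide), Finset.sum_singleton]
  simp only [Int.cast_one, mul_one, Int.cast_zero, mul_zero, add_zero, Int.cast_neg,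
    mul_neg, even_two, Even.neg_pow, zero_add]
  ring

lemma StepDist.inv_card_le_vJsq (hJ : StepDist J) : (J.card : ℝ)⁻¹ ≤ vJsq J := by
  have sum_le : ∑ y ∈ dirsZ, ((1 : ℝ) * y.1 + 0 * y.2) ^ 2 / 2 ≤
      ∑ y ∈ J, ((1 : ℝ) * y.1 + 0 * y.2) ^ 2 / 2 :=
    Finset.sum_le_sum_of_subset_of_nonneg hJ.dirsZ_subset fun y _ _ => by positivity
  rw [sum_sq_pairing_dirsZ (1, 0), hJ.sum_sq_pairing (1, 0)] at sum_le
  rw [inv_le_iff_one_le_mul₀' hJ.card_pos]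
  simpa using sum_le

lemma SmallCoupling.vJsq_add_pos (hs : SmallCoupling J γ s) (hJ : StepDist J) :
    0 < vJsq J + s := by
  have s_ge := (abs_le.1 hs.abs_s_le).1
  rw [mul_inv] at s_ge
  linarith [hJ.inv_card_le_vJsq, inv_pos.2 hJ.card_pos]

end SymbolBounds

section SmallMomentum

variable {ι : Type*} {l : Filter ι} {t : ι → ℝ}

lemma one_sub_cos_eq_sinc_sq (x : ℝ) : 1 - cos x = x ^ 2 / 2 * sinc (x / 2) ^ 2 := by
  rcases eq_or_ne x 0 with rfl | hx
  · simp
  · rw [sinc_of_ne_zero (by simpa using hx), div_pow, Real.sin_sq_eq_half_sub]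
    field_simp

lemma tendsto_one_sub_cos_div_sq (ht : ∀ i, t i ≠ 0) (ht0 : Tendsto t l (𝓝 0)) {a : ι → ℝ} {x : ℝ}
    (ha : Tendsto a l (𝓝 x)) :
    Tendsto (fun i => (1 - cos (t i * a i)) / t i ^ 2) l (𝓝 (x ^ 2 / 2)) := by
  have eq_sinc (i : ι) :
      a i ^ 2 / 2 * sinc (t i * a i / 2) ^ 2 = (1 - cos (t i * a i)) / t i ^ 2 := by
    have := ht i
    rw [one_sub_cos_eq_sinc_sq]
    field_simp
  have sinc_tendsto : Tendsto (fun i => sinc (t i * a i / 2)) l (𝓝 1) := by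
    rw [← sinc_zero]
    exact (continuous_sinc.tendsto 0).comp (by simpa using (ht0.mul ha).div_const 2)
  simpa [eq_sinc] using ((ha.pow 2).div_const 2).mul (sinc_tendsto.pow 2)

variable {a : ι → ℝ × ℝ} {x : ℝ × ℝ}

lemma tendsto_stepSymbol_div_sq (S : Finset (ℤ × ℤ)) (ht : ∀ i, t i ≠ 0)
    (ht0 : Tendsto t l (𝓝 0)) (ha : Tendsto a l (𝓝 x)) :
    Tendsto (fun i => stepSymbol S (t i • a i) / t i ^ 2) l
      (𝓝 (∑ y ∈ S, (x.1 * y.1 + x.2 * y.2) ^ 2 / 2)) := by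
  simp_rw [stepSymbol, Finset.sum_div, Prod.smul_fst, Prod.smul_snd, smul_eq_mul, mul_assoc,
    ← mul_add]
  exact tendsto_finsetSum _ fun y _ => tendsto_one_sub_cos_div_sq ht ht0
    ((ha.fst_nhds.mul_const _).add (ha.snd_nhds.mul_const _))

theorem SmallCoupling.tendsto_sq_mul_ctildeSymbol {J : Finset (ℤ × ℤ)} {γ s : ℝ}
    (hs : SmallCoupling J γ s) (hJ : StepDist J) (ht : ∀ i, t i ≠ 0) (ht0 : Tendsto t l (𝓝 0))
    (ha : Tendsto a l (𝓝 x)) (hx : 0 < x.1 ^ 2 + x.2 ^ 2) :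
    Tendsto (fun i => t i ^ 2 * ctildeSymbol J γ s 0 (t i • a i)) l
      (𝓝 ((vJsq J + s) * (x.1 ^ 2 + x.2 ^ 2))⁻¹) := by
  have lam_tendsto : Tendsto (fun i => stepSymbol dirsZ (t i • a i) / t i ^ 2) l
      (𝓝 (x.1 ^ 2 + x.2 ^ 2)) :=
    sum_sq_pairing_dirsZ x ▸ tendsto_stepSymbol_div_sq dirsZ ht ht0 ha
  have symbol_tendsto : Tendsto (fun i => laplacianSymbol J (t i • a i) / t i ^ 2) l
      (𝓝 (vJsq J * (x.1 ^ 2 + x.2 ^ 2))) := by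
    have h := (tendsto_stepSymbol_div_sq J ht ht0 ha).const_mul (J.card : ℝ)⁻¹
    rw [hJ.sum_sq_pairing, inv_mul_cancel_left₀ hJ.card_pos.ne'] at h
    simpa only [laplacianSymbol, mul_div_assoc] using h
  have numer_tendsto : Tendsto (fun i => 1 - s * γ * stepSymbol dirsZ (t i • a i)) l (𝓝 1) := by
    have h := (((ht0.pow 2).mul lam_tendsto).const_mul (s * γ)).const_sub 1
    simpa [mul_div_cancel₀ _ (pow_ne_zero 2 (ht _))] using h
  have denom_tendsto : Tendsto (fun i => ctildeDenom J γ s 0 (t i • a i) / t i ^ 2) l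
      (𝓝 ((vJsq J + s) * (x.1 ^ 2 + x.2 ^ 2))) := by
    have h := (symbol_tendsto.mul numer_tendsto).add (lam_tendsto.const_mul s)
    rw [mul_one, ← add_mul] at h
    refine h.congr fun i => ?_
    rw [ctildeDenom]
    ring
  rw [← one_div]
  refine (numer_tendsto.div denom_tendsto (mul_pos (hs.vJsq_add_pos hJ) hx).ne').congr fun i => ?_
  rw [Pi.div_apply, ctildeSymbol, div_div_eq_mul_div]
  ring

end SmallMomentum

/-! ### The Fourier transform of finitely supported functions on `ℤ²` -/

/-- The Fourier transform `ĥ(θ) = ∑ₓ h(x) e^{-iθ·x}` of a function on `ℤ²`, for use with finitely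
supported `h`. -/
def latticeFT (h : ℤ × ℤ → ℝ) (θ : ℝ × ℝ) : ℂ := ∑' x, h x * latticeChar θ (-x)

section LatticeFourier

variable {h : ℤ × ℤ → ℝ} {θ : ℝ × ℝ} {M B : ℝ}

lemma norm_latticeChar (θ : ℝ × ℝ) (x : ℤ × ℤ) : ‖latticeChar θ x‖ = 1 :=
  Complex.norm_exp_I_mul_ofReal _

lemma norm_latticeChar_sub_one_le (θ : ℝ × ℝ) (x : ℤ × ℤ) :
    ‖latticeChar θ x - 1‖ ≤ 2 * ‖θ‖ * ‖x‖ := by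
  have mul_le₁ : ‖θ.1 * x.1‖ ≤ ‖θ‖ * ‖x‖ := by
    rw [norm_mul, Int.norm_cast_real]
    exact mul_le_mul (norm_fst_le θ) (norm_fst_le x) (norm_nonneg _) (norm_nonneg _)
  have mul_le₂ : ‖θ.2 * x.2‖ ≤ ‖θ‖ * ‖x‖ := by
    rw [norm_mul, Int.norm_cast_real]
    exact mul_le_mul (norm_snd_le θ) (norm_snd_le x) (norm_nonneg _) (norm_nonneg _)
  calc ‖latticeChar θ x - 1‖ ≤ ‖θ.1 * x.1 + θ.2 * x.2‖ := norm_exp_I_mul_ofReal_sub_one_le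
    _ ≤ ‖θ‖ * ‖x‖ + ‖θ‖ * ‖x‖ := norm_add_le_of_le mul_le₁ mul_le₂
    _ = 2 * ‖θ‖ * ‖x‖ := by ring

lemma two_div_pi_mul_abs_le_norm_exp_sub_one {t : ℝ} (ht : |t| ≤ π) :
    2 / π * |t| ≤ ‖Complex.exp (Complex.I * t) - 1‖ := by
  have half_le : |t / 2| ≤ π / 2 := by
    rw [abs_div, abs_two]
    linarith
  have sin_ge := mul_abs_le_abs_sin half_le
  rw [abs_div, abs_two] at sin_ge
  rw [Complex.norm_exp_I_mul_ofReal_sub_one, norm_mul, norm_eq_abs, norm_eq_abs, abs_two]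
  linarith

lemma exists_mem_dirsZ_norm_latticeChar_sub_one_ge (hθ : ‖θ‖ ≤ π) :
    ∃ μ ∈ dirsZ, 2 / π * ‖θ‖ ≤ ‖latticeChar θ μ - 1‖ := by
  rcases max_choice ‖θ.1‖ ‖θ.2‖ with hmax | hmax <;> rw [Prod.norm_def, hmax] at hθ ⊢
  · refine ⟨(1, 0), by decide, (two_div_pi_mul_abs_le_norm_exp_sub_one hθ).trans_eq ?_⟩
    simp [latticeChar_apply]
  · refine ⟨(0, 1), by decide, (two_div_pi_mul_abs_le_norm_exp_sub_one hθ).trans_eq ?_⟩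
    simp [latticeChar_apply]

lemma mem_Icc_floor_iff_norm_le {x : ℤ × ℤ} :
    x ∈ Finset.Icc (-⌊M⌋, -⌊M⌋) (⌊M⌋, ⌊M⌋) ↔ ‖x‖ ≤ M := by
  have abs_le_iff (a : ℤ) : ‖a‖ ≤ M ↔ -⌊M⌋ ≤ a ∧ a ≤ ⌊M⌋ := by
    rw [Int.norm_eq_abs, abs_le, neg_le (a := ⌊M⌋), Int.le_floor, Int.le_floor, neg_le]
    push_cast
    rfl
  rw [Finset.mem_Icc, Prod.le_def, Prod.le_def, norm_prod_le_iff, abs_le_iff, abs_le_iff]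
  exact and_and_and_comm

lemma finite_support_of_norm_le (hsupp : ∀ x, h x ≠ 0 → ‖x‖ ≤ M) :
    (Function.support h).Finite :=
  (Finset.finite_toSet _).subset fun x hx =>
    Finset.mem_coe.2 (mem_Icc_floor_iff_norm_le.2 (hsupp x hx))

lemma summable_mul_of_norm_le (hsupp : ∀ x, h x ≠ 0 → ‖x‖ ≤ M) (c : ℤ × ℤ → ℂ) :
    Summable fun x => h x * c x := by
  refine summable_of_hasFiniteSupport ((finite_support_of_norm_le hsupp).subset fun x hx => ?_)
  simpa using left_ne_zero_of_mul hx

lemma norm_tsum_le_of_norm_le {E : Type*} [SeminormedAddCommGroup E] {c : ℤ × ℤ → E} (hM : 0 ≤ M)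
    (hsupp : ∀ x, c x ≠ 0 → ‖x‖ ≤ M) (hc : ∀ x, ‖c x‖ ≤ B) :
    ‖∑' x, c x‖ ≤ (2 * M + 1) ^ 2 * B := by
  have B_nonneg : 0 ≤ B := (norm_nonneg _).trans (hc 0)
  have floor_nonneg : 0 ≤ ⌊M⌋ := Int.floor_nonneg.2 hM
  have card_box : (Finset.Icc (-⌊M⌋, -⌊M⌋) (⌊M⌋, ⌊M⌋)).card = ((2 * ⌊M⌋ + 1) ^ 2 : ℝ) := by
    rw [Finset.card_Icc_prod, Int.card_Icc]
    have card_side : ((⌊M⌋ + 1 - -⌊M⌋).toNat : ℤ) = 2 * ⌊M⌋ + 1 := by omega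
    have card_side_real : ((⌊M⌋ + 1 - -⌊M⌋).toNat : ℝ) = 2 * ⌊M⌋ + 1 := mod_cast card_side
    rw [Nat.cast_mul, card_side_real, sq]
  rw [tsum_eq_sum (s := Finset.Icc (-⌊M⌋, -⌊M⌋) (⌊M⌋, ⌊M⌋)) fun x hx => by
    by_contra hne
    exact hx (mem_Icc_floor_iff_norm_le.2 (hsupp x hne))]
  calc _ ≤ ∑ _x ∈ Finset.Icc (-⌊M⌋, -⌊M⌋) (⌊M⌋, ⌊M⌋), B := norm_sum_le_of_le _ fun x _ => hc x
    _ = (2 * ⌊M⌋ + 1) ^ 2 * B := by rw [Finset.sum_const, nsmul_eq_mul, card_box]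
    _ ≤ (2 * M + 1) ^ 2 * B := by
      gcongr
      exact Int.floor_le M

lemma latticeFT_zero (h : ℤ × ℤ → ℝ) : latticeFT h 0 = (∑' x, h x : ℝ) := by
  simp [latticeFT, latticeChar_apply, Complex.ofReal_tsum]

lemma norm_latticeFT_le (hM : 0 ≤ M) (hsupp : ∀ x, h x ≠ 0 → ‖x‖ ≤ M) (hB : ∀ x, |h x| ≤ B)
    (θ : ℝ × ℝ) : ‖latticeFT h θ‖ ≤ (2 * M + 1) ^ 2 * B := by
  refine norm_tsum_le_of_norm_le hM (fun x hx => hsupp x ?_) fun x => ?_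
  · simpa using left_ne_zero_of_mul hx
  · rw [norm_mul, norm_latticeChar, mul_one, Complex.norm_real]
    exact hB x

lemma norm_latticeFT_le_of_tsum_eq_zero (hM : 0 ≤ M) (hsupp : ∀ x, h x ≠ 0 → ‖x‖ ≤ M)
    (hB : ∀ x, |h x| ≤ B) (hsum : ∑' x, h x = 0) (θ : ℝ × ℝ) :
    ‖latticeFT h θ‖ ≤ (2 * M + 1) ^ 2 * (B * (2 * ‖θ‖ * M)) := by
  have B_nonneg : 0 ≤ B := (abs_nonneg _).trans (hB 0)
  have eq_tsum_sub : latticeFT h θ = ∑' x, h x * (latticeChar θ (-x) - 1) := by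
    simp_rw [mul_sub]
    rw [(summable_mul_of_norm_le hsupp _).tsum_sub (summable_mul_of_norm_le hsupp _)]
    simp [latticeFT, ← Complex.ofReal_tsum, hsum]
  rw [eq_tsum_sub]
  refine norm_tsum_le_of_norm_le hM (fun x hx => hsupp x ?_) fun x => ?_
  · simpa using left_ne_zero_of_mul hx
  · rcases eq_or_ne (h x) 0 with h0 | h0
    · rw [h0, Complex.ofReal_zero, zero_mul, norm_zero]
      positivity
    · rw [norm_mul, Complex.norm_real]
      gcongr
      · exact hB x
      · refine (norm_latticeChar_sub_one_le θ (-x)).trans ?_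
        rw [norm_neg]
        gcongr
        exact hsupp x h0

lemma latticeFT_translate (h : ℤ × ℤ → ℝ) (θ : ℝ × ℝ) (μ : ℤ × ℤ) :
    latticeFT (fun x => h (x + μ)) θ = latticeChar θ μ * latticeFT h θ := by
  rw [latticeFT, latticeFT, ← tsum_mul_left,
    ← (Equiv.addRight μ).tsum_eq fun x => latticeChar θ μ * (h x * latticeChar θ (-x))]
  refine tsum_congr fun x => ?_
  rw [Equiv.coe_addRight, mul_left_comm, ← AddChar.map_add_eq_mul, neg_add_rev,
    add_neg_cancel_left]

lemma norm_latticeChar_sub_one_mul_norm_latticeFT_le {μ : ℤ × ℤ} (hM : 0 ≤ M)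
    (hsupp : ∀ x, h x ≠ 0 → ‖x‖ ≤ M) (hgrad : ∀ x, |h (x + μ) - h x| ≤ B) (θ : ℝ × ℝ) :
    ‖latticeChar θ μ - 1‖ * ‖latticeFT h θ‖ ≤ (2 * (M + ‖μ‖) + 1) ^ 2 * B := by
  have supp_translate : ∀ x, h (x + μ) ≠ 0 → ‖x‖ ≤ M + ‖μ‖ := fun x hx => by
    linarith [hsupp _ hx, norm_sub_le (x + μ) μ, congrArg norm (add_sub_cancel_right x μ)]
  have summation_by_parts : latticeFT (fun x => h (x + μ) - h x) θ =
      (latticeChar θ μ - 1) * latticeFT h θ := by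
    rw [sub_one_mul, ← latticeFT_translate, latticeFT, latticeFT, latticeFT,
      ← (summable_mul_of_norm_le supp_translate _).tsum_sub (summable_mul_of_norm_le hsupp _)]
    exact tsum_congr fun x => by push_cast; ring
  rw [← norm_mul, ← summation_by_parts]
  refine norm_latticeFT_le (by positivity) (fun x hx => ?_) hgrad θ
  by_cases h0 : h x = 0
  · exact supp_translate x (by simpa [h0] using hx)
  · linarith [hsupp x h0, norm_nonneg μ]

lemma norm_eq_one_of_mem_dirsZ : ∀ μ ∈ dirsZ, ‖μ‖ = 1 := by
  simp [dirsZ, Prod.norm_def]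

lemma norm_mul_norm_latticeFT_le (hM : 0 ≤ M) (hsupp : ∀ x, h x ≠ 0 → ‖x‖ ≤ M)
    (hgrad : ∀ x, ∀ μ ∈ dirsZ, |h (x + μ) - h x| ≤ B) (hθ : ‖θ‖ ≤ π) :
    ‖θ‖ * ‖latticeFT h θ‖ ≤ π / 2 * ((2 * M + 3) ^ 2 * B) := by
  obtain ⟨μ, hμ, char_ge⟩ := exists_mem_dirsZ_norm_latticeChar_sub_one_ge hθ
  have by_parts :=
    norm_latticeChar_sub_one_mul_norm_latticeFT_le hM hsupp (fun x => hgrad x μ hμ) θ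
  calc ‖θ‖ * ‖latticeFT h θ‖ = π / 2 * (2 / π * ‖θ‖ * ‖latticeFT h θ‖) := by field_simp
    _ ≤ π / 2 * (‖latticeChar θ μ - 1‖ * ‖latticeFT h θ‖) := by gcongr
    _ ≤ π / 2 * ((2 * (M + ‖μ‖) + 1) ^ 2 * B) := by gcongr
    _ = π / 2 * ((2 * M + 3) ^ 2 * B) := by
      rw [norm_eq_one_of_mem_dirsZ μ hμ]
      ring

lemma torusDFT_toTorus {n : ℕ} [NeZero n] (hfin : (Function.support h).Finite) (k : Torus n) :
    torusDFT n (toTorus n h) k = latticeFT h (torusFreq n k) := by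
  have eq_zero_of_notMem : ∀ x ∉ hfin.toFinset, h x = 0 := fun x hx => by simpa using hx
  have toTorus_eq (y : Torus n) :
      toTorus n h y = ∑ x ∈ hfin.toFinset, if torusProj n x = y then h x else 0 :=
    tsum_eq_sum fun x hx => by simp [eq_zero_of_notMem x hx]
  have latticeFT_eq : latticeFT h (torusFreq n k) =
      ∑ x ∈ hfin.toFinset, h x * latticeChar (torusFreq n k) (-x) :=
    tsum_eq_sum fun x hx => by simp [eq_zero_of_notMem x hx]
  rw [latticeFT_eq, torusDFT_apply]
  simp_rw [toTorus_eq, Complex.ofReal_sum, Finset.sum_mul]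
  rw [Finset.sum_comm]
  refine Finset.sum_congr rfl fun x _ => ?_
  have neg_torusProj : -torusProj n x = torusProj n (-x) := by simp [torusProj]
  rw [Fintype.sum_eq_single (torusProj n x) fun y hy => by simp [hy.symm], if_pos rfl,
    neg_torusProj, torusChar_torusProj]

end LatticeFourier

namespace IsAdmissible

variable {f : ℝ × ℝ → ℝ} {fε : ℝ → ℤ × ℤ → ℝ} {Cf ε : ℝ}

lemma constant_nonneg (h : IsAdmissible f fε Cf) : 0 ≤ Cf := by
  have := (abs_nonneg _).trans (h.grad0 (1 / 2) ⟨by norm_num, by norm_num⟩ 0)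
  linarith

lemma norm_le_of_ne_zero (h : IsAdmissible f fε Cf) (hε : ε ∈ Set.Ioo 0 1) (x : ℤ × ℤ)
    (hx : fε ε x ≠ 0) : ‖x‖ ≤ Cf * ε⁻¹ :=
  norm_prod_le_iff.2 (h.supp ε hε x hx)

lemma norm_latticeFT_smul_le (h : IsAdmissible f fε Cf) (hε : ε ∈ Set.Ioo 0 1) (q : ℝ × ℝ) :
    ‖latticeFT (fε ε) (ε • q)‖ ≤ 2 * (2 * Cf + 1) ^ 2 * Cf ^ 2 * ‖q‖ := by
  have Cf_nonneg := h.constant_nonneg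
  have ε_pos := hε.1
  have one_le_inv : 1 ≤ ε⁻¹ := (one_le_inv₀ ε_pos).2 hε.2.le
  calc ‖latticeFT (fε ε) (ε • q)‖
      ≤ (2 * (Cf * ε⁻¹) + 1) ^ 2 * (Cf * ε ^ 2 * (2 * ‖ε • q‖ * (Cf * ε⁻¹))) :=
        norm_latticeFT_le_of_tsum_eq_zero (by positivity) (h.norm_le_of_ne_zero hε)
          (h.grad0 ε hε) (h.sum_zero ε hε) _
    _ ≤ ((2 * Cf + 1) * ε⁻¹) ^ 2 * (Cf * ε ^ 2 * (2 * ‖ε • q‖ * (Cf * ε⁻¹))) := by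
        gcongr
        linarith
    _ = 2 * (2 * Cf + 1) ^ 2 * Cf ^ 2 * ‖q‖ := by
        rw [norm_smul, norm_of_nonneg ε_pos.le]
        field_simp

lemma norm_mul_norm_latticeFT_smul_le (h : IsAdmissible f fε Cf) (hε : ε ∈ Set.Ioo 0 1)
    {q : ℝ × ℝ} (hq : ‖ε • q‖ ≤ π) :
    ‖q‖ * ‖latticeFT (fε ε) (ε • q)‖ ≤ π / 2 * ((2 * Cf + 3) ^ 2 * Cf) := by
  have Cf_nonneg := h.constant_nonneg
  have ε_pos := hε.1
  have one_le_inv : 1 ≤ ε⁻¹ := (one_le_inv₀ ε_pos).2 hε.2.le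
  have grad_le (x μ : ℤ × ℤ) (hμ : μ ∈ dirsZ) : |fε ε (x + μ) - fε ε x| ≤ Cf * ε ^ 3 := by
    have := h.grad1 ε hε x μ hμ
    rw [abs_mul, abs_inv, abs_of_pos ε_pos, inv_mul_le_iff₀ ε_pos] at this
    linarith
  refine le_of_mul_le_mul_left ?_ ε_pos
  calc ε * (‖q‖ * ‖latticeFT (fε ε) (ε • q)‖) = ‖ε • q‖ * ‖latticeFT (fε ε) (ε • q)‖ := by
        rw [norm_smul, norm_of_nonneg ε_pos.le, mul_assoc]
    _ ≤ π / 2 * ((2 * (Cf * ε⁻¹) + 3) ^ 2 * (Cf * ε ^ 3)) :=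
        norm_mul_norm_latticeFT_le (by positivity) (h.norm_le_of_ne_zero hε) grad_le hq
    _ ≤ π / 2 * (((2 * Cf + 3) * ε⁻¹) ^ 2 * (Cf * ε ^ 3)) := by
        gcongr
        linarith
    _ = ε * (π / 2 * ((2 * Cf + 3) ^ 2 * Cf)) := by field_simp

lemma norm_inv_sq_mul_le_decayEnvelope (h : IsAdmissible f fε Cf) (hε : ε ∈ Set.Ioo 0 1)
    (x : ℤ × ℤ) :
    |ε⁻¹ ^ 2 * fε ε x| ≤ Cf * (1 + Cf ^ 2) ^ 2 * decayEnvelope (latticePoint ε x) := by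
  have Cf_nonneg := h.constant_nonneg
  have ε_pos := hε.1
  rcases eq_or_ne (fε ε x) 0 with h0 | h0
  · rw [h0, mul_zero, abs_zero]
    exact mul_nonneg (by positivity) (decayEnvelope_pos _).le
  have norm_le : ‖latticePoint ε x‖ ≤ Cf := by
    rw [norm_latticePoint, abs_of_pos ε_pos]
    calc ε * ‖x‖ ≤ ε * (Cf * ε⁻¹) := by
          gcongr
          exact h.norm_le_of_ne_zero hε x h0
      _ = Cf := by field_simp
  rw [abs_mul, abs_of_pos (by positivity), inv_pow, inv_mul_le_iff₀ (by positivity)]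
  calc |fε ε x| ≤ Cf * ε ^ 2 := h.grad0 ε hε x
    _ = ε ^ 2 * (Cf * ((1 + ‖latticePoint ε x‖ ^ 2) ^ 2 * decayEnvelope (latticePoint ε x))) := by
        rw [decayEnvelope, mul_inv_cancel₀ (by positivity)]
        ring
    _ ≤ ε ^ 2 * (Cf * ((1 + Cf ^ 2) ^ 2 * decayEnvelope (latticePoint ε x))) := by
        have := (decayEnvelope_pos (latticePoint ε x)).le
        gcongr
    _ = ε ^ 2 * (Cf * (1 + Cf ^ 2) ^ 2 * decayEnvelope (latticePoint ε x)) := by ring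

section Limits

variable {ι : Type*} {l : Filter ι} {ε : ι → ℝ}

lemma tendsto_inv_sq_mul (h : IsAdmissible f fε Cf) (hf : Continuous f)
    (hε : ∀ i, ε i ∈ Set.Ioo 0 1) (hε0 : Tendsto ε l (𝓝 0)) {k : ι → ℤ × ℤ} {y : ℝ × ℝ}
    (hk : Tendsto (fun i => latticePoint (ε i) (k i)) l (𝓝 y)) :
    Tendsto (fun i => (ε i)⁻¹ ^ 2 * fε (ε i) (k i)) l (𝓝 (f y)) := by
  have error_tendsto : Tendsto
      (fun i => (ε i)⁻¹ ^ 2 * fε (ε i) (k i) - f (latticePoint (ε i) (k i))) l (𝓝 0) := by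
    rw [Metric.tendsto_nhds]
    intro δ hδ
    obtain ⟨ε₀, hε₀, happrox⟩ := h.approx (δ / 2) (half_pos hδ)
    filter_upwards [hε0.eventually (gt_mem_nhds hε₀)] with i hi
    rw [dist_zero_right]
    exact (happrox _ (hε i) hi _).trans_lt (half_lt_self hδ)
  simpa using error_tendsto.add ((hf.tendsto y).comp hk)

theorem tendsto_latticeFT_contFT [l.IsCountablyGenerated] (h : IsAdmissible f fε Cf)
    (hf : Continuous f) (hε : ∀ i, ε i ∈ Set.Ioo 0 1) (hε0 : Tendsto ε l (𝓝 0))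
    {a : ι → ℝ × ℝ} {q : ℝ × ℝ} (ha : Tendsto a l (𝓝 q)) :
    Tendsto (fun i => latticeFT (fε (ε i)) (ε i • a i)) l (𝓝 (contFT f q)) := by
  set F : ι → ℤ × ℤ → ℂ := fun i x =>
    ((ε i)⁻¹ ^ 2 * fε (ε i) x : ℝ) * latticeChar (ε i • a i) (-x) with hF
  have latticeFT_eq (i : ι) : latticeFT (fε (ε i)) (ε i • a i) = ε i ^ 2 • ∑' x, F i x := by
    have ε_ne_zero : (ε i : ℂ) ≠ 0 := mod_cast (hε i).1.ne'
    rw [latticeFT, ← tsum_const_smul'']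
    refine tsum_congr fun x => ?_
    simp only [hF, Complex.real_smul]
    push_cast
    field_simp
  have finite_support (i : ι) : (Function.support (F i)).Finite := by
    refine (h.finite_supp _ (hε i)).subset fun x hx => ?_
    simp only [hF, Function.mem_support, Complex.ofReal_mul] at hx
    simpa using right_ne_zero_of_mul (left_ne_zero_of_mul hx)
  simp_rw [latticeFT_eq]
  refine tendsto_sq_smul_tsum_integral (fun i => (hε i).1) hε0 finite_support
    (C := Cf * (1 + Cf ^ 2) ^ 2) (fun i x => ?_) (Eventually.of_forall fun y k hk => ?_)
  · rw [norm_mul, norm_latticeChar, mul_one, Complex.norm_real]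
    exact h.norm_inv_sq_mul_le_decayEnvelope (hε i) x
  · have phase_tendsto := (ha.fst_nhds.mul hk.fst_nhds).add (ha.snd_nhds.mul hk.snd_nhds)
    have char_tendsto := (Complex.continuous_exp.tendsto _).comp
      (((Complex.continuous_ofReal.tendsto _).comp phase_tendsto).const_mul (-Complex.I))
    refine ((Complex.continuous_ofReal.tendsto _).comp (h.tendsto_inv_sq_mul hf hε hε0 hk)).mul
      (char_tendsto.congr fun i => ?_)
    simp only [latticePoint, latticeChar_apply, Function.comp_apply, Prod.smul_fst,
      Prod.smul_snd, smul_eq_mul, Prod.fst_neg, Prod.snd_neg]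
    push_cast
    ring_nf

end Limits

end IsAdmissible

/-! ### The limits of vanishing mass and infinite volume -/

section TorusFrequencies

variable {n : ℕ}

lemma torusFreq_zero : torusFreq n 0 = 0 := by
  simp [torusFreq, torusLift, latticePoint]

lemma torusLift_injective : Function.Injective (torusLift n) :=
  Function.LeftInverse.injective (torusProj_torusLift n)

lemma smul_latticePoint_two_pi_div {ε : ℝ} (hε : ε ≠ 0) (k : ℤ × ℤ) :
    ε • latticePoint (2 * π / (ε * n)) k = latticePoint (2 * π / n) k := by
  rw [smul_latticePoint]
  congr 1
  field_simp

variable [NeZero n]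

lemma norm_torusFreq_le (k : Torus n) : ‖torusFreq n k‖ ≤ π := by
  have n_pos : (0 : ℝ) < n := Nat.cast_pos.2 (NeZero.pos n)
  have norm_valMinAbs_le (a : ZMod n) : ‖a.valMinAbs‖ ≤ n / 2 := by
    obtain ⟨h₁, h₂⟩ := a.valMinAbs_mem_Ioc
    have h₁' : -(n : ℝ) < a.valMinAbs * 2 := mod_cast h₁
    have h₂' : (a.valMinAbs * 2 : ℝ) ≤ n := mod_cast h₂
    rw [Int.norm_eq_abs, abs_le]
    constructor <;> linarith
  rw [torusFreq, norm_latticePoint, abs_of_pos (by positivity)]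
  calc 2 * π / n * ‖torusLift n k‖ ≤ 2 * π / n * (n / 2) := by
        gcongr
        exact norm_prod_le_iff.2 ⟨norm_valMinAbs_le k.1, norm_valMinAbs_le k.2⟩
    _ = π := by field_simp

lemma norm_torusFreq_pos {k : Torus n} (hk : k ≠ 0) : 0 < ‖torusFreq n k‖ := by
  have n_pos : (0 : ℝ) < n := Nat.cast_pos.2 (NeZero.pos n)
  have lift_ne_zero : torusLift n k ≠ 0 := fun h =>
    hk (torusLift_injective (h.trans (by simp [torusLift, Prod.ext_iff])))
  rw [torusFreq, norm_latticePoint]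
  have := norm_pos_iff.2 lift_ne_zero
  positivity

lemma torusLift_torusProj {k : ℤ × ℤ} (hk : ‖latticePoint (2 * π / n) k‖ < π) :
    torusLift n (torusProj n k) = k := by
  have n_pos : (0 : ℝ) < n := Nat.cast_pos.2 (NeZero.pos n)
  have norm_lt : ‖k‖ * 2 < n := by
    rw [norm_latticePoint, abs_of_pos (by positivity), div_mul_eq_mul_div, div_lt_iff₀ n_pos,
      mul_comm 2 π, mul_assoc, mul_lt_mul_iff_right₀ pi_pos] at hk
    linarith
  have valMinAbs_eq {a : ℤ} (ha : ‖a‖ ≤ ‖k‖) : (a : ZMod n).valMinAbs = a := by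
    have abs_two_mul_lt : |(a : ℝ) * 2| < n := by
      rw [abs_mul, abs_two, ← Int.norm_eq_abs]
      linarith
    obtain ⟨h₁, h₂⟩ := abs_lt.1 abs_two_mul_lt
    exact (ZMod.valMinAbs_spec _ _).2 ⟨rfl, mod_cast h₁, mod_cast h₂.le⟩
  exact Prod.ext (valMinAbs_eq (norm_fst_le k)) (valMinAbs_eq (norm_snd_le k))

lemma tsum_indicator_range_torusLift {E : Type*} [AddCommMonoid E] [TopologicalSpace E]
    (F : ℤ × ℤ → E) :
    ∑' k, (Set.range (torusLift n)).indicator F k = ∑ k, F (torusLift n k) := by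
  rw [← tsum_subtype, tsum_range F torusLift_injective, tsum_fintype]

-- Seen at momentum scale `ε`, the modes of the torus form a grid of mesh `2π / (εn)`.
lemma average_torusFreq_eq_riemannSum {E : Type*} [AddCommGroup E] [TopologicalSpace E]
    [Module ℝ E] {ε : ℝ} (hε : ε ≠ 0) (Φ : ℝ × ℝ → E) :
    ((n : ℝ) ^ 2)⁻¹ • ∑ k, Φ (torusFreq n k) =
      ((2 * π) ^ 2)⁻¹ • (2 * π / (ε * n)) ^ 2 • ∑' k, (Set.range (torusLift n)).indicator
        (fun k => ε ^ 2 • Φ (ε • latticePoint (2 * π / (ε * n)) k)) k := by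
  have inv_eq : ((n : ℝ) ^ 2)⁻¹ = ((2 * π) ^ 2)⁻¹ * ((2 * π / (ε * n)) ^ 2 * ε ^ 2) := by
    have := NeZero.ne (n : ℝ)
    field_simp
  simp_rw [tsum_indicator_range_torusLift, smul_latticePoint_two_pi_div hε, torusFreq,
    ← Finset.smul_sum, smul_smul, inv_eq]

end TorusFrequencies

theorem tendsto_average_torusFreq {ι : Type*} {l : Filter ι} [l.IsCountablyGenerated]
    {E : Type*} [NormedAddCommGroup E] [NormedSpace ℝ E] [CompleteSpace E]
    {ε : ι → ℝ} (hε : ∀ i, 0 < ε i) (hε0 : Tendsto ε l (𝓝 0)) {n : ι → ℕ} [∀ i, NeZero (n i)]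
    (hn : Tendsto (fun i => ε i * n i) l atTop) {Φ : ι → ℝ × ℝ → E} {C : ℝ}
    (hbound : ∀ i q, ‖ε i • q‖ ≤ π → ‖ε i ^ 2 • Φ i (ε i • q)‖ ≤ C * decayEnvelope q)
    {g : ℝ × ℝ → E}
    (hlim : ∀ᵐ x, ∀ q : ι → ℝ × ℝ, Tendsto q l (𝓝 x) →
      Tendsto (fun i => ε i ^ 2 • Φ i (ε i • q i)) l (𝓝 (g x))) :
    Tendsto (fun i => ((n i : ℝ) ^ 2)⁻¹ • ∑ k, Φ i (torusFreq (n i) k)) l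
      (𝓝 (((2 * π) ^ 2)⁻¹ • ∫ x, g x)) := by
  have mesh_pos (i : ι) : 0 < 2 * π / (ε i * n i) :=
    div_pos two_pi_pos (mul_pos (hε i) (Nat.cast_pos.2 (NeZero.pos (n i))))
  rw [funext fun i => average_torusFreq_eq_riemannSum (n := n i) (hε i).ne' (Φ i)]
  refine (tendsto_sq_smul_tsum_integral (C := C) mesh_pos (hn.const_div_atTop _)
    (fun i => (Set.finite_range _).subset Set.support_indicator_subset) (fun i k => ?_)
    ?_).const_smul _
  · by_cases hk : k ∈ Set.range (torusLift (n i))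
    · rw [Set.indicator_of_mem hk]
      obtain ⟨k, rfl⟩ := hk
      refine hbound i _ ?_
      rw [smul_latticePoint_two_pi_div (hε i).ne']
      exact norm_torusFreq_le k
    · rw [Set.indicator_of_notMem hk, norm_zero]
      have C_nonneg : 0 ≤ C := nonneg_of_mul_nonneg_left
        ((norm_nonneg _).trans (hbound i 0 (by simp [pi_pos.le]))) (decayEnvelope_pos 0)
      exact mul_nonneg C_nonneg (decayEnvelope_pos _).le
  · filter_upwards [hlim] with x hx k hk
    have momentum_tendsto := (hε0.smul hk).norm
    rw [zero_smul, norm_zero] at momentum_tendsto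
    refine (hx _ hk).congr' ?_
    filter_upwards [momentum_tendsto.eventually (gt_mem_nhds pi_pos)] with i hi
    rw [smul_latticePoint_two_pi_div (hε i).ne'] at hi
    rw [Set.indicator_of_mem (Set.mem_range.2 ⟨_, torusLift_torusProj hi⟩)]

section Limits

variable {J : Finset (ℤ × ℤ)} {γ s : ℝ}

theorem SmallCoupling.tendsto_ctildeVal_mass (hs : SmallCoupling J γ s) (hJ : StepDist J)
    {n : ℕ} [NeZero n] {g : Torus n → ℝ} (hg : torusDFT n g 0 = 0) {V : ℝ → ℝ}
    (hV : ∀ m2 > 0, IsCtildeVal J n γ s m2 g (V m2)) :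
    Tendsto V (𝓝[>] 0) (𝓝 (((n : ℝ) ^ 2)⁻¹ *
      ∑ k, Complex.normSq (torusDFT n g k) * ctildeSymbol J γ s 0 (torusFreq n k))) := by
  have V_eq : ∀ m2 ∈ Set.Ioi (0 : ℝ), ((n : ℝ) ^ 2)⁻¹ *
      ∑ k, Complex.normSq (torusDFT n g k) * ctildeSymbol J γ s m2 (torusFreq n k) = V m2 := by
    intro m2 (hm : 0 < m2)
    refine ((hV m2 hm).eq_sum_ctildeSymbol hJ fun k => ?_).symm
    refine ((?_ : (0 : ℝ) < _).trans_le (hs.le_ctildeDenom hJ hm.le (norm_torusFreq_le k))).ne'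
    positivity
  refine (Tendsto.const_mul _ (tendsto_finsetSum _ fun k _ => ?_)).congr'
    (eventually_nhdsWithin_of_forall V_eq)
  rcases eq_or_ne k 0 with rfl | hk
  · simp [hg]
  have denom_ne_zero : ctildeDenom J γ s 0 (torusFreq n k) ≠ 0 := by
    have := norm_torusFreq_pos hk
    have := hJ.card_pos
    refine ((?_ : (0 : ℝ) < _).trans_le (hs.le_ctildeDenom hJ le_rfl (norm_torusFreq_le k))).ne'
    positivity
  have continuousAt : ContinuousAt (fun m2 => ctildeSymbol J γ s m2 (torusFreq n k)) 0 := by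
    refine continuousAt_const.div ?_ denom_ne_zero
    unfold ctildeDenom
    fun_prop
  exact (continuousAt.tendsto.mono_left nhdsWithin_le_nhds).const_mul _

lemma sq_mul_le_of_le_mul_of_mul_le {z r ρ A B K : ℝ} (hz : 0 ≤ z) (hr : 0 ≤ r) (hρ : 0 ≤ ρ)
    (hzr : z ≤ A * r) (hrz : r * z ≤ B) (hρK : r ^ 2 * ρ ≤ K) :
    z ^ 2 * ρ ≤ 2 * (A ^ 2 + B ^ 2) * K * ((1 + r ^ 2) ^ 2)⁻¹ := by
  have sq_le : z ^ 2 ≤ A ^ 2 * r ^ 2 := by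
    rw [← mul_pow]
    gcongr
  have sq_mul_sq_le : r ^ 2 * z ^ 2 ≤ B ^ 2 := by
    rw [← mul_pow]
    gcongr
  rw [← div_eq_mul_inv, le_div_iff₀ (by positivity)]
  calc z ^ 2 * ρ * (1 + r ^ 2) ^ 2 ≤ z ^ 2 * ρ * (2 * (1 + r ^ 2 * r ^ 2)) := by
        gcongr
        linarith [sq_nonneg (1 - r ^ 2)]
    _ = 2 * (z ^ 2 + r ^ 2 * (r ^ 2 * z ^ 2)) * ρ := by ring
    _ ≤ 2 * (A ^ 2 * r ^ 2 + r ^ 2 * B ^ 2) * ρ := by gcongr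
    _ = 2 * (A ^ 2 + B ^ 2) * (r ^ 2 * ρ) := by ring
    _ ≤ 2 * (A ^ 2 + B ^ 2) * K := by gcongr

variable {f : ℝ × ℝ → ℝ} {fε : ℝ → ℤ × ℤ → ℝ} {Cf : ℝ}

lemma IsAdmissible.exists_norm_normSq_mul_ctildeSymbol_le (h : IsAdmissible f fε Cf)
    (hs : SmallCoupling J γ s) (hJ : StepDist J) :
    ∃ C, ∀ ε ∈ Set.Ioo (0 : ℝ) 1, ∀ q : ℝ × ℝ, ‖ε • q‖ ≤ π →
      ‖ε ^ 2 • (Complex.normSq (latticeFT (fε ε) (ε • q)) * ctildeSymbol J γ s 0 (ε • q))‖ ≤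
        C * decayEnvelope q := by
  refine ⟨2 * ((2 * (2 * Cf + 1) ^ 2 * Cf ^ 2) ^ 2 + (π / 2 * ((2 * Cf + 3) ^ 2 * Cf)) ^ 2) *
    (2 * π ^ 2 * J.card), fun ε hε q hq => ?_⟩
  have symbol_le := hs.norm_sq_mul_abs_ctildeSymbol_le hJ hq
  rw [norm_smul, norm_of_nonneg hε.1.le, mul_pow, mul_comm (ε ^ 2), mul_assoc] at symbol_le
  rw [norm_smul, norm_mul, norm_pow, norm_of_nonneg hε.1.le, norm_eq_abs, norm_eq_abs,
    abs_of_nonneg (Complex.normSq_nonneg _), Complex.normSq_eq_norm_sq, mul_left_comm]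
  exact sq_mul_le_of_le_mul_of_mul_le (norm_nonneg _) (norm_nonneg q) (by positivity)
    (h.norm_latticeFT_smul_le hε q) (h.norm_mul_norm_latticeFT_smul_le hε hq) symbol_le

variable {ι : Type*} {l : Filter ι} [l.IsCountablyGenerated] {ε : ι → ℝ}

theorem IsAdmissible.tendsto_average_normSq_mul_ctildeSymbol (h : IsAdmissible f fε Cf)
    (hs : SmallCoupling J γ s) (hJ : StepDist J) (hf : Continuous f)
    (hε : ∀ i, ε i ∈ Set.Ioo 0 1) (hε0 : Tendsto ε l (𝓝 0)) {n : ι → ℕ} [∀ i, NeZero (n i)]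
    (hn : Tendsto (fun i => ε i * n i) l atTop) :
    Tendsto (fun i => ((n i : ℝ) ^ 2)⁻¹ *
      ∑ k, Complex.normSq (latticeFT (fε (ε i)) (torusFreq (n i) k)) *
        ctildeSymbol J γ s 0 (torusFreq (n i) k)) l (𝓝 ((vJsq J + s)⁻¹ * gffPairing f)) := by
  have limit_eq : (vJsq J + s)⁻¹ * gffPairing f = ((2 * π) ^ 2)⁻¹ • ∫ p : ℝ × ℝ,
      Complex.normSq (contFT f p) * ((vJsq J + s) * (p.1 ^ 2 + p.2 ^ 2))⁻¹ := by
    rw [gffPairing, mul_left_comm, ← integral_const_mul, smul_eq_mul]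
    congr 2 with p
    rw [mul_inv]
    ring
  obtain ⟨C, hC⟩ := h.exists_norm_normSq_mul_ctildeSymbol_le hs hJ
  rw [limit_eq]
  refine tendsto_average_torusFreq
    (Φ := fun i θ => Complex.normSq (latticeFT (fε (ε i)) θ) * ctildeSymbol J γ s 0 θ)
    (fun i => (hε i).1) hε0 hn (fun i q hq => hC _ (hε i) q hq) ?_
  filter_upwards [(Set.countable_singleton (0 : ℝ × ℝ)).ae_notMem volume] with x hx q hq
  have norm_sq_pos : 0 < x.1 ^ 2 + x.2 ^ 2 := by
    refine (by positivity : 0 ≤ x.1 ^ 2 + x.2 ^ 2).lt_of_ne' fun h0 => hx ?_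
    rw [add_eq_zero_iff_of_nonneg (sq_nonneg _) (sq_nonneg _), sq_eq_zero_iff,
      sq_eq_zero_iff] at h0
    exact Prod.ext h0.1 h0.2
  have normSq_tendsto := (Complex.continuous_normSq.tendsto _).comp
    (h.tendsto_latticeFT_contFT hf hε hε0 hq)
  have symbol_tendsto :=
    hs.tendsto_sq_mul_ctildeSymbol hJ (fun i => (hε i).1.ne') hε0 hq norm_sq_pos
  exact (normSq_tendsto.mul symbol_tendsto).congr fun i => mul_left_comm _ _ _

end Limits

theorem ctilde_sequence_scaling_limit_general {J : Finset (ℤ × ℤ)} (hJ : StepDist J) {γ s : ℝ}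
    (hs : SmallCoupling J γ s) {f : ℝ × ℝ → ℝ} (hf : Continuous f) {fε : ℝ → ℤ × ℤ → ℝ} {Cf : ℝ}
    (h : IsAdmissible f fε Cf) {ι : Type*} {l : Filter ι} [l.IsCountablyGenerated] {ε : ι → ℝ}
    (hε : ∀ i, ε i ∈ Set.Ioo 0 1) (hε0 : Tendsto ε l (𝓝 0)) {n : ι → ℕ} [∀ i, NeZero (n i)]
    (hn : Tendsto (fun i => ε i * n i) l atTop) {V : ι → ℝ → ℝ}
    (hV : ∀ i, ∀ m2 > 0, IsCtildeVal J (n i) γ s m2 (toTorus (n i) (fε (ε i))) (V i m2)) :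
    ∃ S₁ : ι → ℝ, (∀ i, Tendsto (V i) (𝓝[>] 0) (𝓝 (S₁ i))) ∧
      Tendsto S₁ l (𝓝 ((vJsq J + s)⁻¹ * gffPairing f)) := by
  have dft_eq (i : ι) (k : Torus (n i)) : torusDFT (n i) (toTorus (n i) (fε (ε i))) k =
      latticeFT (fε (ε i)) (torusFreq (n i) k) :=
    torusDFT_toTorus (h.finite_supp _ (hε i)) k
  have zero_mode (i : ι) : torusDFT (n i) (toTorus (n i) (fε (ε i))) 0 = 0 := by
    rw [dft_eq, torusFreq_zero, latticeFT_zero, h.sum_zero _ (hε i), Complex.ofReal_zero]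
  refine ⟨_, fun i => hs.tendsto_ctildeVal_mass hJ (zero_mode i) (hV i), ?_⟩
  simp_rw [dft_eq]
  exact h.tendsto_average_normSq_mul_ctildeSymbol hs hJ hf hε hε0 hn

/-- **Lemma 2.5, sequence version**: with `ε_N → 0` and `ε_N L^N → ∞`,
`lim_{N→∞} lim_{m²↓0} (f_{ε_N}, C̃^{Λ_N}(s,m²) f_{ε_N}) = (v_J²+s)⁻¹ (f,(−Δ_{ℝ²})⁻¹ f)`. -/
theorem ctilde_sequence_scaling_limit
    (L : ℕ) (hL : 1 < L) (J : Finset (ℤ × ℤ)) (hJ : StepDist J)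
    (γ : ℝ) (hγ : γ ∈ Set.Ioo (0 : ℝ) (1 / 3)) :
    ∃ s₀ > (0 : ℝ), ∀ s : ℝ, |s| ≤ s₀ →
      ∀ f : ℝ × ℝ → ℝ, ContDiff ℝ (⊤ : ℕ∞) f → HasCompactSupport f →
        (∫ x : ℝ × ℝ, f x) = 0 →
        ∀ (fε : ℝ → (ℤ × ℤ) → ℝ) (Cf : ℝ), IsAdmissible f fε Cf →
          ∀ εN : ℕ → ℝ, (∀ N, εN N ∈ Set.Ioo (0 : ℝ) 1) →
            Tendsto εN atTop (nhds 0) →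
            Tendsto (fun N : ℕ => εN N * (L : ℝ) ^ N) atTop atTop →
            ∀ V : ℕ → ℝ → ℝ,
              (∀ N : ℕ, ∀ m2 > (0 : ℝ),
                IsCtildeVal J (L ^ N) γ s m2 (toTorus (L ^ N) (fε (εN N))) (V N m2)) →
              ∃ S₁ : ℕ → ℝ,
                (∀ N : ℕ,
                  Tendsto (V N) (nhdsWithin 0 (Set.Ioi 0)) (nhds (S₁ N))) ∧
                Tendsto S₁ atTop (nhds ((vJsq J + s)⁻¹ * gffPairing f)) := by
  have card_pos := hJ.card_pos
  refine ⟨(16 * (J.card + |γ|))⁻¹, by positivity, ?_⟩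
  intro s hs f hf _ _ fε Cf h εN hε hε0 hn V hV
  have : NeZero L := ⟨by lia⟩
  exact ctilde_sequence_scaling_limit_general hJ (.of_abs_le hJ hs) hf.continuous h hε hε0
    (by simpa using hn) hV

end
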